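/- arXiv:2508.03671 — 2 statements merged into one kernel-verified Lean document; each statement's English description precedes it below -/
import Mathlib

section
/- For every R > 0, every x' ∈ (−R, R), and every continuous function φ : [−R, R] → ℝ, one has lim_{t → 0⁺} ∫_{−R}^{R} f₁(x, t; x') · φ(x) dx = φ(x'); i.e., f₁(·, t; x') converges weakly to the Dirac delta at x' as t → 0⁺, so f₁ satisfies the initial condition of the forward Kolmogorov problem. -/
open Real Filter Topology MeasureTheory

/-- Dirichlet heat kernel of the interval `(-R, R)` with source `x'`. -/
noncomputable def f₁ (R x' x t : ℝ) : ℝ :=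
  ∑' k : ℕ, (1 / R) * Real.sin (((k : ℝ) + 1) * π * (x' + R) / (2 * R)) *
    Real.sin (((k : ℝ) + 1) * π * (x + R) / (2 * R)) *
    Real.exp (-((((k : ℝ) + 1) * π) ^ 2 / (4 * R ^ 2)) * t / 2)

open HurwitzZeta HurwitzKernelBounds in
lemma K_unif {δ ε : ℝ} (hδ : 0 < δ) (hε : 0 < ε) :
    ∀ᶠ s in 𝓝[>] (0 : ℝ), ∀ a : ℝ, δ ≤ |a| → |a| ≤ 1 - δ →
      |cosKernel (a : UnitAddCircle) s| < ε := by
  have hlim : Tendsto (fun x : ℝ => 2 * (x ^ (1 / 2 : ℝ) * rexp (-(π * δ ^ 2) * x)) *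
      (1 - rexp (-π * x))⁻¹) atTop (𝓝 (2 * 0 * (1 - 0)⁻¹)) := by
    refine Tendsto.mul (Tendsto.const_mul _ ?_) (Tendsto.inv₀ (Tendsto.const_sub _ ?_) (by simp))
    · exact tendsto_rpow_mul_exp_neg_mul_atTop_nhds_zero _ _ (by positivity)
    · refine Real.tendsto_exp_atBot.comp ?_
      exact tendsto_id.const_mul_atTop_of_neg (by linarith [pi_pos])
  simp only [mul_zero, zero_mul] at hlim
  have h2 := tendsto_inv_nhdsGT_zero.eventually (hlim.eventually (gt_mem_nhds hε))
  filter_upwards [h2, self_mem_nhdsWithin] with s hs hs0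
  have key : ∀ a : ℝ, δ ≤ a → a ≤ 1 - δ → |cosKernel (a : UnitAddCircle) s| < ε := by
    intro a ha1 ha2
    have hx : 0 < s⁻¹ := inv_pos.2 hs0
    have hfe := evenKernel_functional_equation a s⁻¹
    rw [one_div s⁻¹, inv_inv] at hfe
    have hp : 0 < s⁻¹ ^ (1 / 2 : ℝ) := rpow_pos_of_pos hx _
    have hc : cosKernel (a : UnitAddCircle) s = s⁻¹ ^ (1 / 2 : ℝ) * evenKernel a s⁻¹ := by
      rw [hfe, ← mul_assoc, mul_one_div_cancel hp.ne', one_mul]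
    have hF : evenKernel a s⁻¹ = F_int 0 a s⁻¹ := by
      simp [← (hasSum_int_evenKernel a hx).tsum_eq, F_int, f_int]
    rw [F_int_eq_of_mem_Icc 0 ⟨by linarith, by linarith⟩ hx] at hF
    have b1 := F_nat_zero_le (a := a) (by linarith) hx
    have b2 := F_nat_zero_le (a := 1 - a) (by linarith) hx
    have hden : 0 < 1 - rexp (-π * s⁻¹) := by
      have : rexp (-π * s⁻¹) < 1 := by
        rw [Real.exp_lt_one_iff]; nlinarith [mul_pos pi_pos hx]
      linarith
    have mono : ∀ c : ℝ, δ ≤ c → rexp (-π * c ^ 2 * s⁻¹) / (1 - rexp (-π * s⁻¹)) ≤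
        rexp (-(π * δ ^ 2) * s⁻¹) / (1 - rexp (-π * s⁻¹)) := by
      intro c hc
      gcongr
      have : δ ^ 2 ≤ c ^ 2 := by gcongr
      nlinarith [mul_le_mul_of_nonneg_left this pi_pos.le]
    have h3 : |evenKernel a s⁻¹| ≤ 2 * (rexp (-(π * δ ^ 2) * s⁻¹) / (1 - rexp (-π * s⁻¹))) := by
      rw [hF]
      refine (abs_add_le _ _).trans ?_
      rw [Real.norm_eq_abs] at b1 b2
      linarith [mono a ha1, mono (1 - a) (by linarith)]
    rw [hc, abs_mul, abs_of_pos hp]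
    refine lt_of_le_of_lt (mul_le_mul_of_nonneg_left h3 hp.le) (lt_of_eq_of_lt ?_ hs)
    rw [div_eq_mul_inv]; ring
  intro a h1 h2
  rcases abs_cases a with ⟨h, _⟩ | ⟨h, _⟩
  · rw [h] at h1 h2; exact key a h1 h2
  · rw [h] at h1 h2
    have := key (-a) h1 h2
    rwa [QuotientAddGroup.mk_neg, cosKernel_neg] at this

open HurwitzZeta in
lemma K_cont {s : ℝ} (hs : 0 < s) : Continuous (fun a : ℝ => cosKernel (a : UnitAddCircle) s) := by
  apply Complex.continuous_re.comp (f := fun a : ℝ ↦ (cosKernel (a : UnitAddCircle) s : ℂ))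
  simp only [cosKernel_def]
  refine continuous_iff_continuousAt.2 fun a => ?_
  exact (continuousAt_jacobiTheta₂ a <| by simpa).comp
    (f := fun u : ℝ ↦ ((u : ℂ), Complex.I * s)) (by fun_prop)

open HurwitzZeta in
lemma K_nonneg {s : ℝ} (hs : 0 < s) (a : ℝ) : 0 ≤ cosKernel (a : UnitAddCircle) s := by
  have hx : 0 < s⁻¹ := inv_pos.2 hs
  have hfe := evenKernel_functional_equation a s⁻¹
  rw [one_div s⁻¹, inv_inv] at hfe
  have hp : 0 < s⁻¹ ^ (1 / 2 : ℝ) := rpow_pos_of_pos hx _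
  have hc : cosKernel (a : UnitAddCircle) s = s⁻¹ ^ (1 / 2 : ℝ) * evenKernel a s⁻¹ := by
    rw [hfe, ← mul_assoc, mul_one_div_cancel hp.ne', one_mul]
  rw [hc]
  exact mul_nonneg hp.le ((hasSum_int_evenKernel a hx).nonneg fun _ => (exp_pos _).le)

open HurwitzZeta in
lemma K_integral {s : ℝ} (hs : 0 < s) :
    ∫ a in (-(1 / 2) : ℝ)..(1 / 2), cosKernel (a : UnitAddCircle) s = 1 := by
  have hsum : Summable fun n : ℕ => 2 * rexp (-π * (n + 1) ^ 2 * s) := by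
    have := (HurwitzKernelBounds.summable_f_nat 0 1 hs).mul_left 2
    simpa [HurwitzKernelBounds.f_nat] using this
  have h := intervalIntegral.hasSum_integral_of_dominated_convergence (μ := volume)
    (a := (-(1 / 2) : ℝ)) (b := 1 / 2)
    (F := fun (n : ℕ) (a : ℝ) => 2 * Real.cos (2 * π * a * (n + 1)) * rexp (-π * (n + 1) ^ 2 * s))
    (f := fun a => cosKernel (a : UnitAddCircle) s - 1)
    (fun n _ => 2 * rexp (-π * (n + 1) ^ 2 * s))
    (fun n => Continuous.aestronglyMeasurable (by fun_prop))
    (fun n => Eventually.of_forall fun a _ => by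
      rw [norm_mul, norm_mul, Real.norm_of_nonneg (exp_pos _).le, Real.norm_eq_abs (Real.cos _)]
      have := Real.abs_cos_le_one (2 * π * a * (n + 1))
      have h0 := exp_pos (-π * ((n : ℝ) + 1) ^ 2 * s)
      rw [Real.norm_of_nonneg (by norm_num : (0 : ℝ) ≤ 2)]
      nlinarith)
    (Eventually.of_forall fun a _ => hsum)
    (by simp)
    (Eventually.of_forall fun a _ => hasSum_nat_cosKernel₀ a hs)
  have hz : ∀ n : ℕ, ∫ a in (-(1 / 2) : ℝ)..(1 / 2),
      2 * Real.cos (2 * π * a * (n + 1)) * rexp (-π * (n + 1) ^ 2 * s) = 0 := by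
    intro n
    rw [intervalIntegral.integral_mul_const, intervalIntegral.integral_const_mul]
    have hne : (2 * π * ((n : ℝ) + 1)) ≠ 0 := by positivity
    have : ∀ a : ℝ, Real.cos (2 * π * a * (n + 1)) = Real.cos ((2 * π * (n + 1)) * a) := by
      intro a; ring_nf
    simp only [this]
    rw [intervalIntegral.integral_comp_mul_left (fun y => Real.cos y) hne, integral_cos]
    have e1 : 2 * π * ((n : ℝ) + 1) * (1 / 2) = ((n + 1 : ℕ) : ℝ) * π := by push_cast; ring
    have e2 : 2 * π * ((n : ℝ) + 1) * -(1 / 2) = -(((n + 1 : ℕ) : ℝ) * π) := by push_cast; ring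
    rw [e1, e2, Real.sin_neg, Real.sin_nat_mul_pi]; simp
  simp only [hz] at h
  have h0 := h.unique hasSum_zero
  rw [intervalIntegral.integral_sub ((K_cont hs).intervalIntegrable _ _) (by simp)] at h0
  norm_num at h0 ⊢
  linarith

open HurwitzZeta in
lemma f₁_eq {R : ℝ} (hR : 0 < R) (x' x : ℝ) {t : ℝ} (ht : 0 < t) :
    f₁ R x' x t = 1 / (4 * R) * cosKernel (((x - x') / (4 * R) : ℝ) : UnitAddCircle) (π * t / (8 * R ^ 2))
      - 1 / (4 * R) * cosKernel (((x + x' + 2 * R) / (4 * R) : ℝ) : UnitAddCircle)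
        (π * t / (8 * R ^ 2)) := by
  have hs : 0 < π * t / (8 * R ^ 2) := by positivity
  have h := ((hasSum_nat_cosKernel₀ ((x - x') / (4 * R)) hs).sub
    (hasSum_nat_cosKernel₀ ((x + x' + 2 * R) / (4 * R)) hs)).mul_left (1 / (4 * R))
  rw [f₁]
  refine Eq.trans ?_ (h.tsum_eq.trans (by ring))
  congr 1
  ext k
  have e1 : 2 * π * ((x - x') / (4 * R)) * ((k : ℝ) + 1) =
    ((k : ℝ) + 1) * π * (x + R) / (2 * R) - ((k : ℝ) + 1) * π * (x' + R) / (2 * R) := by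
    field_simp; ring
  have e2 : 2 * π * ((x + x' + 2 * R) / (4 * R)) * ((k : ℝ) + 1) =
    ((k : ℝ) + 1) * π * (x + R) / (2 * R) + ((k : ℝ) + 1) * π * (x' + R) / (2 * R) := by
    field_simp; ring
  have e3 : -((((k : ℝ) + 1) * π) ^ 2 / (4 * R ^ 2)) * t / 2 =
      -π * ((k : ℝ) + 1) ^ 2 * (π * t / (8 * R ^ 2)) := by
    field_simp; ring
  rw [e1, e2, e3, Real.cos_sub, Real.cos_add]
  field_simp
  ring

open HurwitzZeta in
/-- As `t → 0⁺`, the Dirichlet heat kernel `f₁(·, t; x')` converges weakly to the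
Dirac delta at `x'`: for every continuous `φ` on `[-R, R]`,
`∫_{-R}^{R} f₁(x, t; x') φ(x) dx → φ(x')`. -/
theorem f₁_initial_condition (R : ℝ) (hR : 0 < R) (x' : ℝ)
    (hx' : x' ∈ Set.Ioo (-R) R) (φ : ℝ → ℝ)
    (hφ : ContinuousOn φ (Set.Icc (-R) R)) :
    Tendsto (fun t => ∫ x in (-R)..R, f₁ R x' x t * φ x) (𝓝[>] 0)
      (𝓝 (φ x')) := by
  obtain ⟨hx1, hx2⟩ := hx'
  have hRR : -R ≤ R := by linarith
  have hs : Tendsto (fun t : ℝ => π * t / (8 * R ^ 2)) (𝓝[>] 0) (𝓝[>] 0) := by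
    refine tendsto_nhdsWithin_iff.2 ⟨?_, ?_⟩
    · have : Continuous (fun t : ℝ => π * t / (8 * R ^ 2)) := by fun_prop
      have h := this.tendsto 0
      simp only [mul_zero, zero_div] at h
      exact h.mono_left nhdsWithin_le_nhds
    · filter_upwards [self_mem_nhdsWithin] with t ht
      have : (0 : ℝ) < t := ht
      exact Set.mem_Ioi.2 (by positivity)
  set σ : ℝ → ℝ := fun t => π * t / (8 * R ^ 2) with hσ
  have hσ0 : ∀ᶠ t in 𝓝[>] (0 : ℝ), 0 < σ t := hs.eventually self_mem_nhdsWithin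
  set P : ℝ → ℝ → ℝ := fun t x =>
    1 / (4 * R) * cosKernel (((x - x') / (4 * R) : ℝ) : UnitAddCircle) (σ t) with hP
  set Q : ℝ → ℝ → ℝ := fun t x =>
    1 / (4 * R) * cosKernel (((x + x' + 2 * R) / (4 * R) : ℝ) : UnitAddCircle) (σ t) with hQ
  have hPc : ∀ t, 0 < σ t → Continuous (P t) := fun t ht =>
    continuous_const.mul ((K_cont ht).comp (by fun_prop))
  have hQc : ∀ t, 0 < σ t → Continuous (Q t) := fun t ht =>
    continuous_const.mul ((K_cont ht).comp (by fun_prop))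
  -- the reflected part
  obtain ⟨M, hM⟩ := isCompact_Icc.exists_bound_of_continuousOn hφ
  have hQlim : Tendsto (fun t => ∫ x in (-R)..R, Q t x * φ x) (𝓝[>] 0) (𝓝 0) := by
    rw [Metric.tendsto_nhds]
    intro ε hε
    have hM0 : 0 ≤ M := (norm_nonneg _).trans (hM x' ⟨hx1.le, hx2.le⟩)
    set δ := min ((x' + R) / (4 * R)) ((R - x') / (4 * R)) with hδ
    have hδ0 : 0 < δ := lt_min (div_pos (by linarith) (by linarith))
      (div_pos (by linarith) (by linarith))
    have hη : 0 < ε / (M + 1) := by positivity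
    filter_upwards [hs.eventually (K_unif hδ0 hη), hσ0] with t ht ht0
    rw [dist_zero_right]
    have hb : ∀ x ∈ Set.uIoc (-R) R, ‖Q t x * φ x‖ ≤ 1 / (4 * R) * (ε / (M + 1)) * M := by
      intro x hx
      rw [Set.uIoc_of_le hRR] at hx
      obtain ⟨h1, h2⟩ := hx
      have hpos : 0 ≤ (x + x' + 2 * R) / (4 * R) := div_nonneg (by linarith) (by linarith)
      have := ht ((x + x' + 2 * R) / (4 * R)) (by
        rw [abs_of_nonneg hpos]
        refine (min_le_left _ _).trans ?_
        exact div_le_div_of_nonneg_right (by linarith) (by linarith)) (by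
        rw [abs_of_nonneg hpos]
        have : δ ≤ (R - x') / (4 * R) := min_le_right _ _
        have h4 : (x + x' + 2 * R) / (4 * R) + (R - x') / (4 * R) ≤ 1 := by
          rw [← add_div, div_le_one (by linarith)]; linarith
        linarith)
      rw [norm_mul]
      gcongr
      · rw [hQ, norm_mul, Real.norm_of_nonneg (by positivity)]
        gcongr
        exact this.le
      · exact hM x ⟨h1.le, h2⟩
    refine lt_of_le_of_lt (intervalIntegral.norm_integral_le_of_norm_le_const hb) ?_
    rw [abs_of_nonneg (by linarith)]
    have : 1 / (4 * R) * (ε / (M + 1)) * M * (R - -R) = ε * (M / (2 * (M + 1))) := by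
      field_simp; ring
    rw [this]
    have : M / (2 * (M + 1)) < 1 := by rw [div_lt_one (by positivity)]; linarith
    nlinarith
  -- the peak part
  set S := Set.Ioc (x' - 2 * R) (x' + 2 * R) with hS
  set g := (Set.Ioc (-R) R).indicator φ with hg
  have hsub : Set.Ioc (-R) R ⊆ S := Set.Ioc_subset_Ioc (by linarith) (by linarith)
  have hφi : IntegrableOn φ (Set.Ioc (-R) R) :=
    (hφ.integrableOn_Icc).mono_set Set.Ioc_subset_Icc_self
  have hnb : Set.Ioo (-R) R ∈ 𝓝 x' := Ioo_mem_nhds hx1 hx2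
  have hPlim : Tendsto (fun t => ∫ x in S, P t x • g x) (𝓝[>] 0) (𝓝 (φ x')) := by
    refine tendsto_setIntegral_peak_smul_of_integrableOn_of_tendsto (x₀ := x')
      measurableSet_Ioc measurableSet_Ioc subset_rfl self_mem_nhdsWithin ?_ ?_ ?_ ?_ ?_ ?_ ?_
    · simp
    · filter_upwards [hσ0] with t ht x _
      exact mul_nonneg (by positivity) (K_nonneg ht _)
    · intro u hu hxu
      rw [Metric.tendstoUniformlyOn_iff]
      intro ε hε
      obtain ⟨r, hr, hru⟩ := Metric.isOpen_iff.1 hu x' hxu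
      have hδ0 : 0 < min (r / (4 * R)) (1 / 2) := lt_min (by positivity) (by norm_num)
      filter_upwards [hs.eventually (K_unif hδ0 (ε := ε * (4 * R)) (by positivity))] with t ht x hx
      have hxr : r ≤ |x - x'| := by
        by_contra! hc
        exact hx.2 (hru (by rwa [Metric.mem_ball, Real.dist_eq]))
      have hx2R : |x - x'| ≤ 2 * R := abs_le.2 ⟨by linarith [hx.1.1], by linarith [hx.1.2]⟩
      have habs : |(x - x') / (4 * R)| = |x - x'| / (4 * R) := by
        rw [abs_div, abs_of_pos (by positivity : (0 : ℝ) < 4 * R)]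
      have := ht ((x - x') / (4 * R)) (by
        rw [habs]; refine (min_le_left _ _).trans ?_; gcongr) (by
        rw [habs]
        have h1 := min_le_right (r / (4 * R)) (1 / 2)
        have h2 : |x - x'| / (4 * R) ≤ 1 / 2 := by
          rw [div_le_iff₀ (by positivity)]; linarith
        linarith)
      simp only [Pi.zero_apply, dist_zero_left]
      rw [hP, norm_mul, Real.norm_of_nonneg (by positivity), Real.norm_eq_abs]
      rw [one_div, inv_mul_lt_iff₀ (by positivity)]
      linarith
    · refine tendsto_const_nhds.congr' ?_
      filter_upwards [hσ0] with t ht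
      rw [← intervalIntegral.integral_of_le (by linarith)]
      simp only [hP]
      rw [intervalIntegral.integral_const_mul]
      have h := intervalIntegral.integral_comp_div_sub
        (a := x' - 2 * R) (b := x' + 2 * R) (c := 4 * R)
        (fun a : ℝ => cosKernel (a : UnitAddCircle) (σ t)) (by positivity) (x' / (4 * R))
      have : ∀ x : ℝ, (x - x') / (4 * R) = x / (4 * R) - x' / (4 * R) := fun x => sub_div _ _ _
      have hh := h
      simp only [← this] at hh
      rw [hh]
      have e1 : (x' - 2 * R - x') / (4 * R) = -(1 / 2) := by field_simp; ring
      have e2 : (x' + 2 * R - x') / (4 * R) = 1 / 2 := by field_simp; ring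
      rw [e1, e2, K_integral ht]
      simp only [smul_eq_mul]; field_simp
    · filter_upwards [hσ0] with t ht
      exact (hPc t ht).aestronglyMeasurable
    · exact ((integrable_indicator_iff measurableSet_Ioc).2 hφi).integrableOn
    · refine Tendsto.mono_left ?_ nhdsWithin_le_nhds
      have hc : ContinuousAt φ x' := hφ.continuousAt (Icc_mem_nhds hx1 hx2)
      refine hc.tendsto.congr' ?_
      filter_upwards [hnb] with x hx
      rw [hg, Set.indicator_of_mem (Set.Ioo_subset_Ioc_self hx)]
  have := hPlim.sub hQlim
  rw [sub_zero] at this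
  refine this.congr' ?_
  filter_upwards [hσ0, self_mem_nhdsWithin] with t ht ht0
  have hfin : ∫ x in S, P t x • g x = ∫ x in (-R)..R, P t x * φ x := by
    rw [intervalIntegral.integral_of_le hRR]
    have : (fun x => P t x • g x) = (Set.Ioc (-R) R).indicator (fun x => P t x * φ x) := by
      ext x
      by_cases hx : x ∈ Set.Ioc (-R) R <;> simp [hg, hx]
    rw [this, setIntegral_indicator measurableSet_Ioc, Set.inter_eq_right.2 hsub]
  have hu : Set.uIcc (-R) R = Set.Icc (-R) R := Set.uIcc_of_le hRR
  rw [hfin, ← intervalIntegral.integral_sub]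
  · refine intervalIntegral.integral_congr fun x _ => ?_
    rw [f₁_eq hR x' x ht0]
    simp only [hP, hQ, hσ]; ring
  · exact ContinuousOn.intervalIntegrable (((hPc t ht).continuousOn).mul (hu ▸ hφ))
  · exact ContinuousOn.intervalIntegrable (((hQc t ht).continuousOn).mul (hu ▸ hφ))
end

section
/- For every R > 0, the total mass of the radial forward Kolmogorov solution in the 3-ball tends to one as t → 0⁺: lim_{t → 0⁺} ∫_0^R 4π r² · g(r, t) dr = 1. -/
open Real Filter Topology MeasureTheory

/-- Radially symmetric forward Kolmogorov solution for a standard 3-dimensional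
Brownian motion started at the center of the ball of radius `R` and killed at its
boundary. -/
noncomputable def g (R r t : ℝ) : ℝ :=
  ∑' k : ℕ, (((k : ℝ) + 1) * π / (2 * π * R ^ 2 * r)) *
    Real.sin (((k : ℝ) + 1) * π * r / R) *
    Real.exp (-(((k : ℝ) + 1) ^ 2 * π ^ 2 * t) / (2 * R ^ 2))

lemma half_ne_zero_circle : (((1 / 2 : ℝ)) : UnitAddCircle) ≠ 0 := by
  intro h
  rw [AddCircle.coe_eq_zero_iff] at h
  obtain ⟨n, hn⟩ := h
  have h2 : (2 * n : ℝ) = 1 := by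
    simp at hn
    linarith
  have : (2 * n : ℤ) = 1 := by exact_mod_cast h2
  omega

lemma tendsto_cosKernel_half :
    Tendsto (fun s => HurwitzZeta.cosKernel ((1 / 2 : ℝ) : UnitAddCircle) s) (𝓝[>] 0) (𝓝 0) := by
  obtain ⟨p, hp, h⟩ := HurwitzZeta.isBigO_atTop_evenKernel_sub ((1 / 2 : ℝ) : UnitAddCircle)
  simp only [if_neg half_ne_zero_circle, sub_zero] at h
  have h1 : Tendsto (fun x : ℝ => x ^ (1 / 2 : ℝ) *
      HurwitzZeta.evenKernel ((1 / 2 : ℝ) : UnitAddCircle) x) atTop (𝓝 0) :=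
    ((Asymptotics.isBigO_refl (fun x : ℝ => x ^ (1 / 2 : ℝ)) atTop).mul h).trans_tendsto
      (tendsto_rpow_mul_exp_neg_mul_atTop_nhds_zero (1 / 2) p hp)
  have h2 := h1.comp tendsto_inv_nhdsGT_zero
  refine h2.congr' ?_
  filter_upwards [self_mem_nhdsWithin] with s hs
  have hs : 0 < s := hs
  have : (s⁻¹ : ℝ) ^ (1 / 2 : ℝ) ≠ 0 := (rpow_pos_of_pos (inv_pos.2 hs) _).ne'
  simp only [Function.comp, HurwitzZeta.evenKernel_functional_equation]
  rw [← mul_assoc, mul_one_div_cancel this, one_mul, one_div s⁻¹, inv_inv]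

lemma integral_r_sin (a R : ℝ) (ha : a ≠ 0) :
    ∫ r in (0 : ℝ)..R, r * Real.sin (a * r) =
      -(R * Real.cos (a * R)) / a + Real.sin (a * R) / a ^ 2 := by
  rw [intervalIntegral.integral_eq_sub_of_hasDerivAt
    (f := fun r => -(r * Real.cos (a * r)) / a + Real.sin (a * r) / a ^ 2)]
  · simp
  · intro x _
    have h0 : HasDerivAt (fun r : ℝ => a * r) a x := by
      simpa using (hasDerivAt_id x).const_mul a
    have h1 := ((((hasDerivAt_id x).mul h0.cos).neg).div_const a).add (h0.sin.div_const (a ^ 2))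
    refine h1.congr_deriv ?_
    simp only [id]
    field_simp
    ring
  · apply Continuous.intervalIntegrable
    fun_prop

lemma mass_eq (R : ℝ) (hR : 0 < R) (t : ℝ) (ht : 0 < t) :
    ∫ r in (0 : ℝ)..R, 4 * π * r ^ 2 * g R r t =
      1 - HurwitzZeta.cosKernel ((1 / 2 : ℝ) : UnitAddCircle) (π / (2 * R ^ 2) * t) := by
  set s := π / (2 * R ^ 2) * t with hs
  have hs0 : 0 < s := by positivity
  set F : ℕ → ℝ → ℝ := fun k r => (2 * ((k : ℝ) + 1) * π / R ^ 2 *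
    rexp (-π * ((k : ℝ) + 1) ^ 2 * s)) * (r * Real.sin ((((k : ℝ) + 1) * π / R) * r)) with hF
  have hsum := HurwitzKernelBounds.summable_f_nat 1 1 hs0
  have hbs : Summable fun k : ℕ => 2 * π / R * HurwitzKernelBounds.f_nat 1 1 s k :=
    hsum.mul_left _
  have hb : ∀ n r, r ∈ Set.uIoc 0 R →
      ‖F n r‖ ≤ 2 * π / R * HurwitzKernelBounds.f_nat 1 1 s n := by
    intro n r hr
    rw [Set.uIoc_of_le hR.le] at hr
    have h1 : ‖r * Real.sin ((((n : ℝ) + 1) * π / R) * r)‖ ≤ R * 1 := by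
      rw [norm_mul]
      refine mul_le_mul ?_ (abs_sin_le_one _) (norm_nonneg _) hR.le
      rw [Real.norm_eq_abs, abs_of_pos hr.1]; exact hr.2
    have h2 : 0 ≤ (2 * ((n : ℝ) + 1) * π / R ^ 2 * rexp (-π * ((n : ℝ) + 1) ^ 2 * s)) := by
      positivity
    simp only [hF]
    rw [norm_mul, Real.norm_of_nonneg h2]
    refine (mul_le_mul_of_nonneg_left h1 h2).trans (le_of_eq ?_)
    simp only [HurwitzKernelBounds.f_nat]
    field_simp
  have key : HasSum (fun n => ∫ r in (0 : ℝ)..R, F n r)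
      (∫ r in (0 : ℝ)..R, 4 * π * r ^ 2 * g R r t) := by
    refine intervalIntegral.hasSum_integral_of_dominated_convergence
      (fun n _ => 2 * π / R * HurwitzKernelBounds.f_nat 1 1 s n) ?_ ?_ ?_ ?_ ?_
    · intro n
      apply Continuous.aestronglyMeasurable
      fun_prop
    · intro n
      exact Eventually.of_forall fun r hr => hb n r hr
    · exact Eventually.of_forall fun r hr => hbs
    · exact intervalIntegrable_const
    · refine Eventually.of_forall fun r hr => ?_
      have hS : Summable fun n => F n r := hbs.of_norm_bounded fun n => hb n r hr
      rw [Set.uIoc_of_le hR.le] at hr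
      have hr0 := hr.1
      have : 4 * π * r ^ 2 * g R r t = ∑' n, F n r := by
        rw [g, ← tsum_mul_left]
        refine tsum_congr fun k => ?_
        have e1 : -(((k : ℝ) + 1) ^ 2 * π ^ 2 * t) / (2 * R ^ 2) = -π * ((k : ℝ) + 1) ^ 2 * s := by
          rw [hs]; field_simp
        have e2 : ((k : ℝ) + 1) * π * r / R = ((k : ℝ) + 1) * π / R * r := by ring
        simp only [hF]
        rw [e1, e2]
        field_simp
        ring
      rw [this]
      exact hS.hasSum
  have h2 := (HurwitzZeta.hasSum_nat_cosKernel₀ (1 / 2) hs0).neg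
  rw [neg_sub] at h2
  refine key.unique (h2.congr_fun fun n => ?_)
  have hn : ((n : ℝ) + 1) * π / R ≠ 0 := by positivity
  simp only [hF]
  rw [intervalIntegral.integral_const_mul, integral_r_sin _ _ hn]
  have e1 : ((n : ℝ) + 1) * π / R * R = ((n + 1 : ℕ) : ℝ) * π := by
    push_cast; field_simp
  have e2 : 2 * π * (1 / 2) * ((n : ℝ) + 1) = ((n + 1 : ℕ) : ℝ) * π := by
    push_cast; ring
  rw [e1, e2, Real.sin_nat_mul_pi]
  field_simp
  ring

/-- The total mass of the radial forward Kolmogorov solution in the 3-ball tends to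
one as `t → 0⁺`: `lim_{t → 0⁺} ∫_0^R 4πr² g(r, t) dr = 1`. -/
theorem g_total_mass_tendsto_one (R : ℝ) (hR : 0 < R) :
    Tendsto (fun t => ∫ r in (0 : ℝ)..R, 4 * π * r ^ 2 * g R r t) (𝓝[>] 0)
      (𝓝 1) := by
  have hc : 0 < π / (2 * R ^ 2) := by positivity
  have h1 : Tendsto (fun t : ℝ => π / (2 * R ^ 2) * t) (𝓝[>] 0) (𝓝[>] 0) := by
    refine tendsto_nhdsWithin_iff.2 ⟨?_, ?_⟩
    · have : Tendsto (fun t : ℝ => π / (2 * R ^ 2) * t) (𝓝 0) (𝓝 (π / (2 * R ^ 2) * 0)) :=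
        tendsto_id.const_mul _
      rw [mul_zero] at this
      exact this.mono_left nhdsWithin_le_nhds
    · filter_upwards [self_mem_nhdsWithin] with t ht
      exact mul_pos hc ht
  have h2 := (tendsto_cosKernel_half.comp h1).const_sub 1
  rw [sub_zero] at h2
  refine h2.congr' ?_
  filter_upwards [self_mem_nhdsWithin] with t ht
  exact (mass_eq R hR t ht).symm
end
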